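/- The function K₊ is continuous on all of ℂ — in particular it extends continuously across the branch cut iℝ≥0 of ln₊ — and K₊(0) = 0; in particular K₊(c) → 0 as c → 0. -/

import Mathlib

noncomputable section

/-- `ln₊`: the determination of the logarithm with branch cut at `iℝ⁺` and `ln₊ 1 = 0`
(a total function on `ℂ` via the convention `Complex.log 0 = 0`). -/
noncomputable def lnPlus (c : ℂ) : ℂ :=
  Complex.log (Complex.I * c) - Complex.I * Real.pi / 2

/-- `K₊ c = -Im (c ln₊ c - c)`. -/
noncomputable def KPlus (c : ℂ) : ℝ := -(c * lnPlus c - c).im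

/-!
Writing `Im (c ln₊ c) = Im c * log ‖c‖ + Re c * (arg (I c) - π / 2)` isolates the two possible
sources of discontinuity. The factor `Im c` absorbs the logarithmic singularity at `0`. Across the
cut `iℝ≥0` the argument jumps by `2π`, but it stays bounded and its factor `Re c` vanishes there.
-/

section

open Complex Filter Topology

theorem continuous_log_norm_smul {E : Type*} [SeminormedAddCommGroup E] [NormedSpace ℝ E] :
    Continuous fun x : E ↦ Real.log ‖x‖ • x := by
  refine continuous_iff_continuousAt.mpr fun x ↦ ?_
  by_cases hx : ‖x‖ = 0
  · have norm_mul_log_tendsto : Tendsto (fun y : E ↦ |‖y‖ * Real.log ‖y‖|) (𝓝 x) (𝓝 0) :=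
      (Real.continuous_mul_log.comp continuous_norm).abs.tendsto' x 0 (by simp [hx])
    rw [ContinuousAt, hx, Real.log_zero, zero_smul]
    refine squeeze_zero_norm (fun y ↦ le_of_eq ?_) norm_mul_log_tendsto
    rw [norm_smul, Real.norm_eq_abs, abs_mul, abs_norm, mul_comm]
  · exact (continuousAt_id.norm.log hx).smul continuousAt_id

theorem continuous_im_mul_arg : Continuous fun z : ℂ ↦ z.im * arg z := by
  refine continuous_iff_continuousAt.mpr fun z ↦ ?_
  by_cases hz : z.im = 0
  · have im_tendsto : Tendsto im (𝓝 z) (𝓝 0) := hz ▸ continuous_im.tendsto z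
    have arg_bounded : IsBoundedUnder (· ≤ ·) (𝓝 z) fun w ↦ ‖arg w‖ :=
      isBoundedUnder_of ⟨Real.pi, abs_arg_le_pi⟩
    simpa only [ContinuousAt, hz, zero_mul] using
      im_tendsto.zero_mul_isBoundedUnder_le arg_bounded
  · exact continuous_im.continuousAt.mul (continuousAt_arg (.inr hz))

theorem lnPlus_re (c : ℂ) : (lnPlus c).re = Real.log ‖c‖ := by
  simp [lnPlus, log_re]

theorem lnPlus_im (c : ℂ) : (lnPlus c).im = arg (I * c) - Real.pi / 2 := by
  simp [lnPlus, log_im]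

theorem KPlus_eq (c : ℂ) :
    KPlus c = c.im - c.im * Real.log ‖c‖ - c.re * (arg (I * c) - Real.pi / 2) := by
  rw [KPlus, sub_im, mul_im, lnPlus_re, lnPlus_im]
  ring

theorem KPlus_zero : KPlus 0 = 0 := by
  simp [KPlus]

theorem continuous_KPlus : Continuous KPlus := by
  have log_term : Continuous fun c : ℂ ↦ c.im * Real.log ‖c‖ := by
    simpa only [Function.comp_def, smul_im, smul_eq_mul, mul_comm] using
      continuous_im.comp (continuous_log_norm_smul (E := ℂ))
  have arg_term : Continuous fun c : ℂ ↦ c.re * arg (I * c) := by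
    simpa only [Function.comp_def, I_mul_im] using
      continuous_im_mul_arg.comp (continuous_const_mul I)
  simp only [funext KPlus_eq, mul_sub]
  fun_prop

end

/-- `K₊` is continuous on all of `ℂ` (in particular across the branch cut `iℝ≥0` of `ln₊`),
`K₊ 0 = 0`, and `K₊ c → 0` as `c → 0`. -/
theorem KPlus_continuous :
    Continuous KPlus ∧ KPlus 0 = 0 ∧ Filter.Tendsto KPlus (nhds 0) (nhds 0) :=
  ⟨continuous_KPlus, KPlus_zero, continuous_KPlus.tendsto' 0 0 KPlus_zero⟩
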